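/- Fix N ≥ 1, K ≥ 1, and α ∈ (0,1) with α ≥ 1/(N+1), and set k = ⌈(1−α)(N+1)⌉. For each experiment index j = 1, …, K let (s^{(j)}_1, …, s^{(j)}_{N+1}) be exchangeable real-valued random variables whose N+1 values are almost surely pairwise distinct, and assume the K tuples are independent and identically distributed across j. Let B_j be the indicator of the event { s^{(j)}_{N+1} ≤ k-th smallest value among s^{(j)}_1, …, s^{(j)}_N }. Then the sum B_1 + ⋯ + B_K has the binomial distribution with K trials and success probability k/(N+1). -/

import Mathlib

open MeasureTheory
open scoped Classical ENNReal

/-- The `k`-th smallest value (counting multiplicities) of a list of reals: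
the `k`-th entry of the list sorted in nondecreasing order. -/
noncomputable def kthSmallest (l : List ℝ) (k : ℕ) : ℝ :=
  (l.mergeSort (fun a b => @decide (a ≤ b) (Classical.propDecidable _))).getD (k - 1) 0

/-- Real-valued random variables `s 0, …, s (n-1)` are exchangeable if the joint
distribution of any permutation of them equals the original joint distribution. -/
def Exchangeable {Ω : Type*} [MeasurableSpace Ω] (P : Measure Ω) {n : ℕ}
    (s : Fin n → Ω → ℝ) : Prop :=
  ∀ π : Equiv.Perm (Fin n),
    Measure.map (fun ω i => s (π i) ω) P = Measure.map (fun ω i => s i ω) P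

/-!
A test score is at most the `k`-th smallest calibration score exactly when fewer than `k`
calibration scores lie strictly below it, that is, when its rank among all `N + 1` scores, counted
from `0`, is less than `k`. Exchangeability gives all `N + 1` positions the same rank distribution,
and as long as the scores are distinct exactly `k` positions have rank less than `k`; taking
expectations, each position does with probability `k / (N + 1)`. The coverage indicators are thus
independent Bernoulli variables with this parameter.
-/

open Finset ProbabilityTheory

section OrderStatistics

variable {α : Type*} {n : ℕ}

lemma countP_ofFn (p : α → Bool) (f : Fin n → α) :
    (List.ofFn f).countP p = #{i | p (f i)} := by
  rw [List.ofFn_eq_map, List.countP_map]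
  simp [List.countP_eq_length_filter, card_def, Fin.univ_def, Function.comp_def]

lemma lt_countP_lt_iff_getElem_lt [LinearOrder α] {l : List α} (hl : l.Pairwise (· ≤ ·))
    {i : ℕ} (hi : i < l.length) (a : α) :
    i < l.countP (· < a) ↔ l[i] < a := by
  have hmono : Monotone l.get := hl.sortedLE.monotone_get
  have hcount : l.countP (· < a) = #{j | l.get j < a} := by
    simpa using countP_ofFn (· < a) l.get
  rw [hcount]
  exact Tuple.lt_card_lt_iff_apply_lt_of_monotone (j := ⟨i, hi⟩) hmono

lemma kthSmallest_lt_iff {l : List ℝ} {k : ℕ} (hk : 1 ≤ k) (hkl : k ≤ l.length) (a : ℝ) :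
    kthSmallest l k < a ↔ k ≤ l.countP (· < a) := by
  have hsorted := List.pairwise_mergeSort' (· ≤ ·) l
  have hperm := List.mergeSort_perm l (· ≤ ·)
  have hlt : k - 1 < (l.mergeSort (· ≤ ·)).length := by rw [hperm.length_eq]; omega
  rw [← hperm.countP_eq, ← Nat.sub_add_cancel hk, Nat.succ_le_iff,
    lt_countP_lt_iff_getElem_lt hsorted hlt, ← List.getD_eq_getElem _ 0 hlt]
  simp [kthSmallest]

end OrderStatistics

section StrictRank

variable {ι κ β : Type*} [Fintype ι] [Fintype κ]

/-- The number of entries of the family `x` lying strictly below its `j`-th entry: the rank of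
`x j`, counted from `0`, with tied entries sharing the smallest rank available to them. -/
def strictRank [LT β] [DecidableLT β] (x : ι → β) (j : ι) : ℕ := #{i | x i < x j}

lemma strictRank_comp_equiv [LT β] [DecidableLT β] (x : ι → β) (e : κ ≃ ι) (j : κ) :
    strictRank (x ∘ e) j = strictRank x (e j) :=
  card_bijective e e.bijective (by simp)

lemma strictRank_lt_strictRank [Preorder β] [DecidableLT β] {x : ι → β} {i j : ι}
    (h : x i < x j) : strictRank x i < strictRank x j := by
  refine card_lt_card <| (ssubset_iff_of_subset ?_).2 ⟨i, by simpa using h, by simp⟩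
  exact monotone_filter_right _ fun _ _ hi ↦ hi.trans h

lemma strictRank_lt_card [Preorder β] [DecidableLT β] (x : ι → β) (j : ι) :
    strictRank x j < Fintype.card ι :=
  card_lt_card <| filter_ssubset.2 ⟨j, mem_univ j, lt_irrefl _⟩

variable [LinearOrder β]

lemma strictRank_injective {x : ι → β} (hx : x.Injective) : (strictRank x).Injective := by
  intro i j hij
  by_contra hne
  rcases lt_or_gt_of_ne (hx.ne hne) with h | h
  · exact (strictRank_lt_strictRank h).ne hij
  · exact (strictRank_lt_strictRank h).ne' hij

lemma image_strictRank {x : ι → β} (hx : x.Injective) :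
    univ.image (strictRank x) = range (Fintype.card ι) := by
  refine eq_of_subset_of_card_le (by simpa [subset_iff] using strictRank_lt_card x) ?_
  rw [card_image_of_injective _ (strictRank_injective hx), card_range, card_univ]

lemma card_strictRank_lt {x : ι → β} (hx : x.Injective) {k : ℕ} (hk : k ≤ Fintype.card ι) :
    #{j | strictRank x j < k} = k := calc
  #{j | strictRank x j < k} = #((univ.image (strictRank x)).filter (· < k)) := by
    rw [filter_image, card_image_of_injective _ (strictRank_injective hx)]
  _ = k := by
    rw [image_strictRank hx, show (range (Fintype.card ι)).filter (· < k) = range k by grind,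
      card_range]

lemma measurable_strictRank [TopologicalSpace β] [OrderClosedTopology β]
    [SecondCountableTopology β] [MeasurableSpace β] [OpensMeasurableSpace β] (j : ι) :
    Measurable fun x : ι → β ↦ strictRank x j := by
  simp only [strictRank, card_filter]
  exact Finset.measurable_sum _ fun i _ ↦ .ite
    (measurableSet_lt (measurable_pi_apply i) (measurable_pi_apply j)) measurable_const
    measurable_const

lemma last_le_kthSmallest_iff {N k : ℕ} (hk : 1 ≤ k) (hkN : k ≤ N) (x : Fin (N + 1) → ℝ) :
    x (Fin.last N) ≤ kthSmallest (List.ofFn fun i : Fin N ↦ x i.castSucc) k ↔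
      strictRank x (Fin.last N) < k := by
  have hrank : strictRank x (Fin.last N) = #{i : Fin N | x i.castSucc < x (Fin.last N)} := by
    rw [strictRank, card_filter, Fin.sum_univ_castSucc, if_neg (lt_irrefl _), add_zero, card_filter]
  rw [← not_lt, kthSmallest_lt_iff hk (by simpa), not_le, countP_ofFn, hrank]
  simp

end StrictRank

section Exchangeable

variable {Ω : Type*} [MeasurableSpace Ω] {P : Measure Ω}

lemma sum_measure_eq_lintegral_card {ι : Type*} [Fintype ι] {A : ι → Set Ω}
    (hA : ∀ i, NullMeasurableSet (A i) P) :
    ∑ i, P (A i) = ∫⁻ ω, #{i | ω ∈ A i} ∂P := by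
  simp_rw [← lintegral_indicator_one₀ (hA _)]
  rw [← lintegral_finsetSum' _ fun i _ ↦ measurable_one.aemeasurable.indicator₀ (hA i)]
  simp [Set.indicator_apply]

namespace Exchangeable

variable {n : ℕ} {s : Fin n → Ω → ℝ}

lemma identDistrib_strictRank (hs : ∀ i, AEMeasurable (s i) P) (hexch : Exchangeable P s)
    (i j : Fin n) :
    IdentDistrib (fun ω ↦ strictRank (s · ω) i) (fun ω ↦ strictRank (s · ω) j) P P := by
  let π := Equiv.swap i j
  have hperm : IdentDistrib (fun ω i' ↦ s (π i') ω) (fun ω i' ↦ s i' ω) P P :=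
    ⟨aemeasurable_pi_lambda _ fun i' ↦ hs (π i'), aemeasurable_pi_lambda _ hs, hexch π⟩
  have hrank : ∀ ω, strictRank (fun i' ↦ s (π i') ω) j = strictRank (s · ω) i := fun ω ↦ by
    simpa [π, Function.comp_def] using strictRank_comp_equiv (s · ω) π j
  simpa only [Function.comp_def, hrank] using hperm.comp (measurable_strictRank j)

lemma measureReal_strictRank_lt [IsProbabilityMeasure P] (hs : ∀ i, AEMeasurable (s i) P)
    (hexch : Exchangeable P s) (hinj : ∀ᵐ ω ∂P, Function.Injective (s · ω)) {k : ℕ} (hk : k ≤ n)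
    (j : Fin n) :
    P.real {ω | strictRank (s · ω) j < k} = k / n := by
  have hmeas : ∀ i, NullMeasurableSet {ω | strictRank (s · ω) i < k} P := fun i ↦
    (hexch.identDistrib_strictRank hs i i).aemeasurable_fst.nullMeasurableSet_preimage
      measurableSet_Iio
  have hsymm : ∀ i, P {ω | strictRank (s · ω) i < k} = P {ω | strictRank (s · ω) j < k} :=
    fun i ↦ (hexch.identDistrib_strictRank hs i j).measure_mem_eq measurableSet_Iio
  have hsum : n * P {ω | strictRank (s · ω) j < k} = k := calc
    n * P {ω | strictRank (s · ω) j < k} = ∑ i, P {ω | strictRank (s · ω) i < k} := by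
      simp [hsymm]
    _ = ∫⁻ ω, #{i | strictRank (s · ω) i < k} ∂P := by
      simpa using sum_measure_eq_lintegral_card hmeas
    _ = ∫⁻ _, k ∂P := lintegral_congr_ae <| hinj.mono fun ω hω ↦ by
      simp [card_strictRank_lt hω (hk.trans_eq (Fintype.card_fin n).symm)]
    _ = k := by simp
  have hn : (n : ℝ) ≠ 0 := Nat.cast_ne_zero.2 j.pos.ne'
  rw [eq_div_iff hn, mul_comm]
  simpa [measureReal_def] using congrArg ENNReal.toReal hsum

end Exchangeable

end Exchangeable

section Binomial

variable {Ω ι : Type*} [MeasurableSpace Ω] {P : Measure Ω} {p : unitInterval}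

lemma hasLaw_bernoulliMeasure_of_measureReal [IsProbabilityMeasure P] {X : Ω → Prop}
    (hX : AEMeasurable X P) (hp : P.real {ω | X ω} = p) :
    HasLaw X (bernoulliMeasure True False p) P where
  map_eq := by
    have hnot : P.real {ω | ¬X ω} = 1 - p := by
      have htrue : NullMeasurableSet {ω | X ω} P := by
        simpa [Set.preimage] using hX.nullMeasurableSet_preimage (measurableSet_singleton True)
      rw [← hp, ← Set.compl_ofPred, probReal_compl_eq_one_sub₀ htrue]
    refine Measure.ext_of_measureReal_singleton fun q ↦ ?_
    rw [map_measureReal_apply_of_aemeasurable hX (measurableSet_singleton q)]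
    by_cases hq : q <;> simp [hq, Set.preimage, hp, hnot]

lemma isSetBernoulli_of_iIndepFun [Countable ι] {X : ι → Ω → Prop}
    (hX : ∀ i, AEMeasurable (X i) P) (hindep : iIndepFun X P)
    (hp : ∀ i, P.real {ω | X i ω} = p) :
    IsSetBernoulli (fun ω ↦ {i | X i ω}) Set.univ p P := by
  have := hindep.isProbabilityMeasure
  have hlaw := hindep.hasLaw_infinitePi
    (fun i ↦ hasLaw_bernoulliMeasure_of_measureReal (hX i) (hp i)) (aemeasurable_pi_lambda _ hX)
  have hset : HasLaw (fun q : ι → Prop ↦ {i | q i}) (setBernoulli Set.univ p)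
      (Measure.infinitePi fun _ : ι ↦ bernoulliMeasure True False p) :=
    ⟨by fun_prop, by simp [setBernoulli_eq_map, bernoulliMeasure_def]⟩
  exact hset.fun_comp hlaw

lemma map_ncard_setBernoulli_eq_binomial [Countable ι] {u : Set ι} (hu : u.Finite) :
    (setBernoulli u p).map Set.ncard = binomial u.ncard p :=
  Measure.ext_of_singleton fun m ↦ by
    rw [map_ncard_setBernoulli_singleton hu, binomial_singleton]

lemma hasLaw_card_binomial_of_iIndepFun [Fintype ι] {X : ι → Ω → Prop}
    (hX : ∀ i, AEMeasurable (X i) P) (hindep : iIndepFun X P)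
    (hp : ∀ i, P.real {ω | X i ω} = p) :
    HasLaw (fun ω ↦ #{i | X i ω}) (binomial (Fintype.card ι) p) P := by
  have hncard :
      HasLaw Set.ncard (binomial (Fintype.card ι) p) (setBernoulli (Set.univ : Set ι) p) :=
    ⟨by fun_prop, by simp [map_ncard_setBernoulli_eq_binomial Set.finite_univ]⟩
  simpa [Set.ncard_eq_toFinset_card'] using
    hncard.fun_comp (isSetBernoulli_of_iIndepFun hX hindep hp)

end Binomial

theorem empirical_coverage_binomial_general {Ω ι : Type*} [MeasurableSpace Ω] [Fintype ι]
    {P : Measure Ω} {N k : ℕ} (hk : 1 ≤ k) (hkN : k ≤ N) {p : unitInterval}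
    (hp : (p : ℝ) = k / (N + 1)) {s : ι → Fin (N + 1) → Ω → ℝ}
    (hs : ∀ j i, AEMeasurable (s j i) P) (hindep : iIndepFun (fun j ω i ↦ s j i ω) P)
    (hexch : ∀ j, Exchangeable P (s j))
    (hinj : ∀ j, ∀ᵐ ω ∂P, Function.Injective (s j · ω)) :
    HasLaw (fun ω ↦ #{j | s j (Fin.last N) ω ≤
        kthSmallest (List.ofFn fun i : Fin N ↦ s j i.castSucc ω) k})
      (binomial (Fintype.card ι) p) P := by
  have := hindep.isProbabilityMeasure
  have hmeas : Measurable fun x : Fin (N + 1) → ℝ ↦ strictRank x (Fin.last N) < k :=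
    measurableSet_setOfPred.1 <| measurable_strictRank _ measurableSet_Iio
  have hs' : ∀ j, AEMeasurable (fun ω i ↦ s j i ω) P := fun j ↦ aemeasurable_pi_lambda _ (hs j)
  have hprob : ∀ j, P.real {ω | strictRank (s j · ω) (Fin.last N) < k} = p := fun j ↦ by
    rw [(hexch j).measureReal_strictRank_lt (hs j) (hinj j) (by omega), hp, Nat.cast_succ]
  have hiff : ∀ j ω, s j (Fin.last N) ω ≤
      kthSmallest (List.ofFn fun i : Fin N ↦ s j i.castSucc ω) k ↔
        strictRank (s j · ω) (Fin.last N) < k :=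
    fun j ω ↦ last_le_kthSmallest_iff hk hkN (s j · ω)
  simpa only [hiff, Function.comp_def] using
    hasLaw_card_binomial_of_iIndepFun (fun j ↦ hmeas.comp_aemeasurable (hs' j))
      (hindep.comp (fun _ x ↦ strictRank x (Fin.last N) < k) fun _ ↦ hmeas) hprob

lemma ceil_one_sub_mul_mem_Icc {α : ℝ} {N : ℕ} (hα1 : α < 1) (hαN : 1 / ((N : ℝ) + 1) ≤ α) :
    ⌈(1 - α) * ((N : ℝ) + 1)⌉₊ ∈ Set.Icc 1 N := by
  have hN : (0 : ℝ) < N + 1 := by positivity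
  rw [div_le_iff₀ hN] at hαN
  exact ⟨Nat.ceil_pos.2 (mul_pos (sub_pos.2 hα1) hN), Nat.ceil_le.2 (by linarith)⟩

/-- Binomial law of the empirical coverage over `K` i.i.d. conformal experiments.
With `k = ⌈(1-α)(N+1)⌉`, the number of experiments `j` in which
`s j (N+1) ≤ (k-th smallest of s j 1, …, s j N)` is binomial with `K` trials and
success probability `k/(N+1)`: for every `m`, the probability that exactly `m`
experiments succeed is `C(K,m) (k/(N+1))^m (1-k/(N+1))^(K-m)`. -/
theorem empirical_coverage_binomial
    {Ω : Type*} [MeasurableSpace Ω] (P : Measure Ω) [IsProbabilityMeasure P]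
    (N K : ℕ) (hN : 1 ≤ N) (hK : 1 ≤ K)
    (α : ℝ) (hα0 : 0 < α) (hα1 : α < 1) (hαN : 1 / ((N : ℝ) + 1) ≤ α)
    (s : Fin K → Fin (N + 1) → Ω → ℝ)
    (hmeas : ∀ j i, Measurable (s j i))
    (hindep : Measure.map (fun ω (j : Fin K) (i : Fin (N + 1)) => s j i ω) P
      = Measure.pi fun j => Measure.map (fun ω i => s j i ω) P)
    (hident : ∀ j j' : Fin K,
      Measure.map (fun ω i => s j i ω) P = Measure.map (fun ω i => s j' i ω) P)
    (hexch : ∀ j, Exchangeable P (s j))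
    (hdistinct : ∀ j, ∀ᵐ ω ∂P, ∀ i i' : Fin (N + 1), i ≠ i' → s j i ω ≠ s j i' ω) :
    ∀ m : ℕ,
      P {ω | (Finset.univ.filter fun j : Fin K =>
          s j (Fin.last N) ω ≤
            kthSmallest (List.ofFn fun i : Fin N => s j i.castSucc ω)
              ⌈(1 - α) * ((N : ℝ) + 1)⌉₊).card = m}
        = ENNReal.ofReal ((K.choose m : ℝ)
            * ((⌈(1 - α) * ((N : ℝ) + 1)⌉₊ : ℝ) / ((N : ℝ) + 1)) ^ m
            * (1 - (⌈(1 - α) * ((N : ℝ) + 1)⌉₊ : ℝ) / ((N : ℝ) + 1)) ^ (K - m)) := by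
  intro m
  obtain ⟨hk, hkN⟩ := ceil_one_sub_mul_mem_Icc hα1 hαN
  set k := ⌈(1 - α) * ((N : ℝ) + 1)⌉₊
  let p : unitInterval := ⟨k / (N + 1), unitInterval.div_mem (by positivity) (by positivity)
    (by exact_mod_cast hkN.trans N.le_succ)⟩
  have hindep' : iIndepFun (fun j ω i ↦ s j i ω) P :=
    (iIndepFun_iff_map_fun_eq_pi_map fun j ↦ (measurable_pi_lambda _ (hmeas j)).aemeasurable).2
      hindep
  have hinj : ∀ j, ∀ᵐ ω ∂P, Function.Injective (s j · ω) := fun j ↦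
    (hdistinct j).mono fun ω h i i' ↦ not_imp_not.1 (h i i')
  have hlaw := empirical_coverage_binomial_general (p := p) hk hkN rfl
    (fun j i ↦ (hmeas j i).aemeasurable) hindep' hexch hinj
  rw [hlaw.measure_eq (p := (· = m)) (measurableSet_singleton m), Fintype.card_fin]
  exact binomial_singleton K m p
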